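/- Let n ≥ 3 and let A have m alternatives. There is no strategyproof SDS that is α-Condorcet-consistent for any α > 2/m. -/

import Mathlib

open Finset

noncomputable section

/-- A preference profile: each voter's strict linear order on the `m`
alternatives is encoded as a ranking permutation, where `R i x` is the rank of
alternative `x` for voter `i` (rank `0` = most preferred). Voter `i` strictly
prefers `x` to `y` iff `R i x < R i y`. -/
abbrev Profile (n m : ℕ) := Fin n → Equiv.Perm (Fin m)

/-- `F R x` is the probability that the social decision scheme `F` assigns to
alternative `x` at profile `R`; `IsSDS F` says every `F R` is a lottery. -/
def IsSDS {n m : ℕ} (F : Profile n m → Fin m → ℝ) : Prop :=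
  (∀ R x, 0 ≤ F R x) ∧ ∀ R, ∑ x, F R x = 1

/-- Stochastic-dominance preference of voter `i` (with preferences as in `R`):
lottery `p` is weakly preferred to lottery `q`. -/
def SDPref {n m : ℕ} (R : Profile n m) (i : Fin n) (p q : Fin m → ℝ) : Prop :=
  ∀ x : Fin m,
    ∑ y ∈ univ.filter (fun y => R i y < R i x), q y ≤
      ∑ y ∈ univ.filter (fun y => R i y < R i x), p y

/-- Strategyproofness: the truthful outcome is SD-preferred to any outcome
obtainable by a unilateral deviation. -/
def Strategyproof {n m : ℕ} (F : Profile n m → Fin m → ℝ) : Prop :=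
  ∀ (R R' : Profile n m) (i : Fin n),
    (∀ j, j ≠ i → R j = R' j) → SDPref R i (F R) (F R')

/-- Anonymity: permuting the voters does not change the outcome. -/
def Anonymous {n m : ℕ} (F : Profile n m → Fin m → ℝ) : Prop :=
  ∀ (π : Equiv.Perm (Fin n)) (R : Profile n m), F (fun i => R (π i)) = F R

/-- The profile obtained from `R` by relabeling the alternatives by `τ`
(in `relabel τ R`, alternative `τ x` gets the rank that `x` has in `R`). -/
def relabel {n m : ℕ} (τ : Equiv.Perm (Fin m)) (R : Profile n m) : Profile n m :=
  fun i => τ.symm.trans (R i)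

/-- Neutrality: relabeling the alternatives permutes the outcome accordingly. -/
def Neutral {n m : ℕ} (F : Profile n m → Fin m → ℝ) : Prop :=
  ∀ (τ : Equiv.Perm (Fin m)) (R : Profile n m) (x : Fin m),
    F (relabel τ R) (τ x) = F R x

/-- The supporting size `n_{xy}(R)`: the number of voters preferring `x` to `y`. -/
def suppSize {n m : ℕ} (R : Profile n m) (x y : Fin m) : ℕ :=
  (univ.filter (fun i => R i x < R i y)).card

/-- `x` is the Condorcet winner of `R`. -/
def CondorcetWinner {n m : ℕ} (R : Profile n m) (x : Fin m) : Prop :=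
  ∀ y, y ≠ x → suppSize R y x < suppSize R x y

/-- `α`-Condorcet-consistency. -/
def CondorcetConsistent {n m : ℕ} (F : Profile n m → Fin m → ℝ) (α : ℝ) : Prop :=
  ∀ R x, CondorcetWinner R x → α ≤ F R x

/-- `x` is Pareto-dominated in `R`. -/
def ParetoDominated {n m : ℕ} (R : Profile n m) (x : Fin m) : Prop :=
  ∃ y, ∀ i, R i y < R i x

/-- `β`-ex post efficiency. -/
def ExPostEff {n m : ℕ} (F : Profile n m → Fin m → ℝ) (β : ℝ) : Prop :=
  ∀ R x, ParetoDominated R x → F R x ≤ β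

/-- The probability that the dictatorial SDS of voter `i` assigns to `x`:
`1` if `x` is voter `i`'s most preferred alternative and `0` otherwise. -/
def dictProb {n m : ℕ} (R : Profile n m) (i : Fin n) (x : Fin m) : ℝ :=
  if ∀ y, R i x ≤ R i y then 1 else 0

/-- `d` is a random dictatorship. -/
def IsRandDict {n m : ℕ} (d : Profile n m → Fin m → ℝ) : Prop :=
  ∃ δ : Fin n → ℝ, (∀ i, 0 ≤ δ i) ∧ ∑ i, δ i = 1 ∧
    ∀ R x, d R x = ∑ i, δ i * dictProb R i x

/-- `F` can be written as `γ d + (1 - γ) g` with `d` a random dictatorship and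
`g` a strategyproof SDS. -/
def DecomposesAt {n m : ℕ} (F : Profile n m → Fin m → ℝ) (γ : ℝ) : Prop :=
  ∃ d g : Profile n m → Fin m → ℝ, IsRandDict d ∧ IsSDS g ∧ Strategyproof g ∧
    ∀ R x, F R x = γ * d R x + (1 - γ) * g R x

/-- `F` is `γ`-randomly dictatorial: `γ ∈ [0,1]` is the maximal value admitting
a decomposition `F = γ d + (1 - γ) g` as above. -/
def RandDictDegree {n m : ℕ} (F : Profile n m → Fin m → ℝ) (γ : ℝ) : Prop :=
  0 ≤ γ ∧ γ ≤ 1 ∧ DecomposesAt F γ ∧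
    ∀ γ', 0 ≤ γ' → γ' ≤ 1 → DecomposesAt F γ' → γ' ≤ γ

/-- The profile `R^{i:yx}` obtained from `R` by swapping `x` and `y` in voter
`i`'s preference relation (used when `x` is ranked directly above `y`). -/
def swapTop {n m : ℕ} (R : Profile n m) (i : Fin n) (x y : Fin m) : Profile n m :=
  Function.update R i ((R i).trans (Equiv.swap (R i x) (R i y)))

/-- The weight vector `b` defining the randomized Copeland rule:
`b k = 2/(m(m-1))` for `k > n/2`, `b k = 1/(m(m-1))` for `k = n/2`, `b k = 0`
for `k < n/2`. -/
def copelandWeight (n m : ℕ) (k : ℕ) : ℝ :=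
  if n < 2 * k then 2 / ((m : ℝ) * ((m : ℝ) - 1))
  else if 2 * k = n then 1 / ((m : ℝ) * ((m : ℝ) - 1))
  else 0

/-- The randomized Copeland rule `f_C(R, x) = ∑_{y ≠ x} b_{n_{xy}(R)}`. -/
def randCopeland (n m : ℕ) : Profile n m → Fin m → ℝ :=
  fun R x => ∑ y ∈ univ.filter (fun y => y ≠ x), copelandWeight n m (suppSize R x y)

/-- A point voting SDS, given by a scoring vector `a` (indexed by ranks
`0, …, m-1`, i.e. `a k` is the score of the `(k+1)`-st ranked alternative). -/
structure PointVoting (n m : ℕ) where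
  a : ℕ → ℝ
  mono : ∀ k l : ℕ, k ≤ l → l < m → a l ≤ a k
  nonneg : ∀ k : ℕ, k < m → 0 ≤ a k
  sum_eq : ∑ k ∈ Finset.range m, a k = 1 / (n : ℝ)

/-- The value of a point voting SDS. -/
def pvVal {n m : ℕ} (pv : PointVoting n m) : Profile n m → Fin m → ℝ :=
  fun R x => ∑ i, pv.a (R i x : ℕ)

/-- A supporting size SDS, given by a vector `b` indexed by supporting sizes
`0, …, n`. -/
structure SupportingSize (n m : ℕ) where
  b : ℕ → ℝ
  mono : ∀ k l : ℕ, k ≤ l → l ≤ n → b k ≤ b l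
  nonneg : ∀ k : ℕ, k ≤ n → 0 ≤ b k
  pair_eq : ∀ k : ℕ, k ≤ n → b k + b (n - k) = 2 / ((m : ℝ) * ((m : ℝ) - 1))

/-- The value of a supporting size SDS. -/
def ssVal {n m : ℕ} (S : SupportingSize n m) : Profile n m → Fin m → ℝ :=
  fun R x => ∑ y ∈ univ.filter (fun y => y ≠ x), S.b (suppSize R x y)

/-- A duple: a strategyproof SDS that puts positive probability on at most two
fixed alternatives. -/
def IsDuple {n m : ℕ} (g : Profile n m → Fin m → ℝ) : Prop :=
  IsSDS g ∧ Strategyproof g ∧ ∃ x y : Fin m, ∀ R z, z ≠ x → z ≠ y → g R z = 0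

/-- A unilateral: a strategyproof SDS that depends only on the preferences of a
single fixed voter. -/
def IsUnilateral {n m : ℕ} (g : Profile n m → Fin m → ℝ) : Prop :=
  IsSDS g ∧ Strategyproof g ∧
    ∃ i : Fin n, ∀ R R' : Profile n m, R i = R' i → g R = g R'

/-- `F` is a convex combination of SDSs satisfying the property `P`. -/
def MixOf {n m : ℕ} (P : (Profile n m → Fin m → ℝ) → Prop)
    (F : Profile n m → Fin m → ℝ) : Prop :=
  ∃ (K : ℕ) (w : Fin K → ℝ) (g : Fin K → Profile n m → Fin m → ℝ),
    (∀ k, 0 ≤ w k) ∧ ∑ k, w k = 1 ∧ (∀ k, P (g k)) ∧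
    ∀ R x, F R x = ∑ k, w k * g k R x

/-- The uniform random dictatorship. -/
def uniformRD (n m : ℕ) : Profile n m → Fin m → ℝ :=
  fun R x => (1 / (n : ℝ)) * ∑ i, dictProb R i x

/-- The uniform lottery. -/
def uniformLottery (n m : ℕ) : Profile n m → Fin m → ℝ :=
  fun _ _ => 1 / (m : ℝ)

/-!
Averaging over all renamings of voters and alternatives, we may assume that the scheme `F` is
anonymous and neutral. When a voter exchanges `x` with the alternative `y` directly below it,
strategyproofness forces all other probabilities to stay put, and the amount that moves from `x`
to `y` depends only on the rank of `x` and on the number of voters preferring `x` to `y`.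
Performing two such exchanges in either order shows that this amount is a function of the rank
plus a function of the support. Pushing `x` to the bottom of every ranking and adding up the
amounts lost, `F R x = ∑ i, A (R i x) + ∑ y, B (n_{xy}(R))` with `A ≥ 0`, `B 0 = 0` and
`B k ≤ B n`.

Since probabilities sum to `1` at a unanimous profile, `n ∑ r, A r + m (m - 1) / 2 * B n = 1`.
With three or more voters, `x` can be a Condorcet winner although half of the residue classes
modulo `4` of voters rank it at `t / 2` and the others at `(m - 1 - t) / 2`. Consistency bounds
`F R x` below by `α` at each of these profiles, and summing over the `m` values of `t` gives
`m α ≤ 2 n ∑ r, A r + m (m - 1) * B n = 2`.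
-/

section

open Function (update)

variable {n m : ℕ}

section Rankings

variable {e e' : Equiv.Perm (Fin m)} {x y z : Fin m}

/-- The strict upper contour set of `x` in the ranking `e`: the alternatives ranked above `x`. -/
def upperContour (e : Equiv.Perm (Fin m)) (x : Fin m) : Finset (Fin m) :=
  univ.filter fun y => e y < e x

@[simp]
lemma mem_upperContour : z ∈ upperContour e x ↔ e z < e x := by
  simp [upperContour]

lemma self_notMem_upperContour : x ∉ upperContour e x := by
  simp

lemma card_upperContour (e : Equiv.Perm (Fin m)) (x : Fin m) : #(upperContour e x) = e x := by
  have h : upperContour e x = (Iio (e x)).map e.symm.toEmbedding := by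
    ext; simp
  simp [h]

lemma upperContour_of_covBy (h : e x ⋖ e y) :
    upperContour e y = insert x (upperContour e x) := by
  ext z
  simp [covBy_iff_lt_iff_le_left.mp h, le_iff_eq_or_lt]

lemma upperContour_of_isMax (h : IsMax (e x)) : upperContour e x = univ.erase x := by
  ext z
  simp [(h.isTop (e z)).lt_iff_ne]

lemma exists_perm_lt_of_lt {β : Type*} [LinearOrder β] (c : Fin m → β) :
    ∃ e : Equiv.Perm (Fin m), ∀ ⦃y z⦄, c y < c z → e y < e z :=
  ⟨(Tuple.sort c).symm, fun y z h => (Tuple.monotone_sort c).reflect_lt (by simpa using h)⟩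

lemma exists_perm_upperContour_eq {U : Finset (Fin m)} (hx : x ∉ U) :
    ∃ e : Equiv.Perm (Fin m), upperContour e x = U := by
  obtain ⟨e, he⟩ := exists_perm_lt_of_lt fun z => if z ∈ U then 0 else if z = x then 1 else 2
  refine ⟨e, ?_⟩
  ext z
  rw [mem_upperContour]
  refine ⟨fun hz => ?_, fun hz => he (by simp [hz, hx])⟩
  by_contra hzU
  have hzx : z ≠ x := by rintro rfl; exact hz.false
  exact hz.asymm (he (by simp [hzU, hzx, hx]))

lemma exists_perm_upperContour_eq_empty (h : e x < e y) :
    ∃ e' : Equiv.Perm (Fin m), upperContour e' x = ∅ ∧ upperContour e' y = upperContour e y := by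
  obtain ⟨e', he'⟩ := exists_perm_lt_of_lt fun z => if z = x then 0 else (e z : ℕ) + 1
  have hyx : y ≠ x := by rintro rfl; exact h.false
  refine ⟨e', ?_, ?_⟩
  · ext z
    by_cases hzx : z = x
    · simp [hzx]
    · simpa using (he' (by simp [hzx])).le
  · ext z
    by_cases hzx : z = x
    · simpa [hzx, h] using he' (by simp [hyx])
    · rw [mem_upperContour, mem_upperContour]
      refine ⟨fun hz => ?_, fun hz => he' (by simpa [hzx, hyx] using hz)⟩
      by_contra! hle
      obtain hlt | heq := hle.lt_or_eq
      · exact hz.asymm (he' (by simpa [hzx, hyx] using hlt))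
      · exact hz.ne (congrArg e' (e.injective heq).symm)

/-- Two rankings that both put `x` above `y` are linked by three steps, each of which fixes the
upper contour set of `x` or of `y`: move `x` to the top, rearrange, move `x` back down. -/
lemma eq_of_forall_upperContour_eq_of_lt {β : Type*} {D : Equiv.Perm (Fin m) → β}
    (hDx : ∀ ⦃e e'⦄, upperContour e x = upperContour e' x → D e = D e')
    (hDy : ∀ ⦃e e'⦄, upperContour e y = upperContour e' y → D e = D e')
    (h : e x < e y) (h' : e' x < e' y) : D e = D e' := by
  obtain ⟨e₁, hx₁, hy₁⟩ := exists_perm_upperContour_eq_empty h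
  obtain ⟨e₂, hx₂, hy₂⟩ := exists_perm_upperContour_eq_empty h'
  calc D e = D e₁ := hDy hy₁.symm
    _ = D e₂ := hDx (hx₁.trans hx₂.symm)
    _ = D e' := hDy hy₂

lemma eq_of_forall_upperContour_eq_of_iff {β : Type*} {D : Equiv.Perm (Fin m) → β} (hxy : x ≠ y)
    (hDx : ∀ ⦃e e'⦄, upperContour e x = upperContour e' x → D e = D e')
    (hDy : ∀ ⦃e e'⦄, upperContour e y = upperContour e' y → D e = D e')
    (h : e x < e y ↔ e' x < e' y) : D e = D e' := by
  obtain hlt | hlt := (e.injective.ne hxy).lt_or_gt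
  · exact eq_of_forall_upperContour_eq_of_lt hDx hDy hlt (h.mp hlt)
  · have hlt' : e' y < e' x :=
      (e'.injective.ne hxy).lt_or_gt.resolve_left fun hc => hlt.asymm (h.mpr hc)
    exact eq_of_forall_upperContour_eq_of_lt hDy hDx hlt hlt'

end Rankings

lemma eq_of_forall_update_eq {ι α β : Type*} [Finite ι] [DecidableEq ι] {D : (ι → α) → β}
    {r : ι → α → α → Prop} (hD : ∀ R j a, r j (R j) a → D (update R j a) = D R)
    {R R' : ι → α} (h : ∀ j, r j (R j) (R' j)) : D R' = D R := by
  cases nonempty_fintype ι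
  have key : ∀ s : Finset ι, D (s.piecewise R' R) = D R := by
    intro s
    induction s using Finset.induction_on with
    | empty => simp
    | insert j s hj ih =>
      rw [piecewise_insert, hD _ _ _ (by simpa [hj] using h j), ih]
  simpa using key univ

section AdjacentSwaps

/-- The ranking obtained from `e` by exchanging the ranks of `x` and `y`, so that
`swapTop R i x y` is `R` with `R i` replaced by `swapRanks (R i) x y`. -/
def swapRanks (e : Equiv.Perm (Fin m)) (x y : Fin m) : Equiv.Perm (Fin m) :=
  e.trans (Equiv.swap (e x) (e y))

variable {e : Equiv.Perm (Fin m)} {x y z : Fin m}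

lemma swapRanks_apply_left : swapRanks e x y x = e y := by
  simp [swapRanks]

lemma swapRanks_apply_right : swapRanks e x y y = e x := by
  simp [swapRanks]

lemma swapRanks_apply_of_ne (hx : z ≠ x) (hy : z ≠ y) : swapRanks e x y z = e z :=
  Equiv.swap_apply_of_ne_of_ne (e.injective.ne hx) (e.injective.ne hy)

lemma ne_of_apply_covBy (h : e x ⋖ e y) : x ≠ y := fun hxy => h.ne (congrArg e hxy)

lemma apply_lt_iff_of_covBy (h : e x ⋖ e y) (hx : z ≠ x) : e z < e x ↔ e z < e y := by
  rw [covBy_iff_lt_iff_le_left.mp h, (e.injective.ne hx).le_iff_lt]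

lemma lt_apply_iff_of_covBy (h : e x ⋖ e y) (hx : z ≠ x) (hy : z ≠ y) :
    e x < e z ↔ e y < e z := by
  rw [← not_iff_not, not_lt, not_lt, (e.injective.ne hx).le_iff_lt,
    (e.injective.ne hy).le_iff_lt, apply_lt_iff_of_covBy h hx]

lemma upperContour_swapRanks_right (h : e x ⋖ e y) :
    upperContour (swapRanks e x y) y = upperContour e x := by
  ext z
  rw [mem_upperContour, mem_upperContour, swapRanks_apply_right]
  obtain rfl | hx := eq_or_ne z x
  · simp [swapRanks_apply_left, h.le]
  obtain rfl | hy := eq_or_ne z y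
  · simp [swapRanks_apply_right, h.le]
  · rw [swapRanks_apply_of_ne hx hy]

lemma upperContour_swapRanks_of_ne (h : e x ⋖ e y) (hx : z ≠ x) (hy : z ≠ y) :
    upperContour (swapRanks e x y) z = upperContour e z := by
  ext w
  rw [mem_upperContour, mem_upperContour, swapRanks_apply_of_ne hx hy]
  obtain rfl | hwx := eq_or_ne w x
  · rw [swapRanks_apply_left, lt_apply_iff_of_covBy h hx hy]
  obtain rfl | hwy := eq_or_ne w y
  · rw [swapRanks_apply_right, lt_apply_iff_of_covBy h hx hy]
  · rw [swapRanks_apply_of_ne hwx hwy]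

variable (R : Profile n m) {i j : Fin n}

lemma swapTop_eq_update (i : Fin n) (x y : Fin m) :
    swapTop R i x y = update R i (swapRanks (R i) x y) :=
  rfl

lemma swapTop_apply_self (i : Fin n) (x y : Fin m) :
    swapTop R i x y i = swapRanks (R i) x y := by
  simp [swapTop_eq_update]

lemma swapTop_apply_of_ne (h : j ≠ i) (x y : Fin m) : swapTop R i x y j = R j := by
  simp [swapTop_eq_update, h]

lemma swapTop_update_of_ne (h : j ≠ i) (a : Equiv.Perm (Fin m)) (x y : Fin m) :
    swapTop (update R j a) i x y = update (swapTop R i x y) j a := by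
  simp [swapTop_eq_update, h.symm, Function.update_comm h]

lemma swapTop_comm (h : i ≠ j) (x y : Fin m) :
    swapTop (swapTop R i x y) j x y = swapTop (swapTop R j x y) i x y := by
  simp [swapTop_eq_update, h, h.symm, Function.update_comm h]

lemma suppSize_self (x : Fin m) : suppSize R x x = 0 := by
  simp [suppSize]

lemma suppSize_le (x y : Fin m) : suppSize R x y ≤ n := by
  simpa [suppSize] using card_filter_le (univ : Finset (Fin n)) fun i => R i x < R i y

lemma suppSize_add_suppSize (h : x ≠ y) : suppSize R x y + suppSize R y x = n := by
  have hc := card_filter_add_card_filter_not (s := univ) fun i => R i x < R i y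
  simp only [not_lt, ((R _).injective.ne h.symm).le_iff_lt, card_univ, Fintype.card_fin] at hc
  exact hc

variable {R}

lemma suppSize_swapTop_left (h : R i x ⋖ R i y) (hz : z ≠ y) :
    suppSize (swapTop R i x y) x z = suppSize R x z := by
  obtain rfl | hzx := eq_or_ne z x
  · rw [suppSize_self, suppSize_self]
  unfold suppSize
  congr 1
  ext j
  obtain rfl | hj := eq_or_ne j i
  · simp [swapTop_apply_self, swapRanks_apply_left, swapRanks_apply_of_ne hzx hz,
      lt_apply_iff_of_covBy h hzx hz]
  · simp [swapTop_apply_of_ne _ hj]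

lemma suppSize_swapTop_add_one (h : R i x < R i y) :
    suppSize (swapTop R i x y) x y + 1 = suppSize R x y := by
  have hfilter : univ.filter (fun j => R j x < R j y) =
      insert i (univ.filter fun j => swapTop R i x y j x < swapTop R i x y j y) := by
    ext j
    obtain rfl | hj := eq_or_ne j i
    · simp [h]
    · simp [swapTop_apply_of_ne _ hj, hj]
  rw [suppSize, suppSize, hfilter, card_insert_of_notMem]
  simpa [swapTop_apply_self, swapRanks_apply_left, swapRanks_apply_right] using h.le

end AdjacentSwaps

section Strategyproofness

variable {F : Profile n m → Fin m → ℝ} {e e' : Equiv.Perm (Fin m)} {x y z : Fin m}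

lemma Strategyproof.sum_upperContour_le (hF : Strategyproof F) (R : Profile n m) (i : Fin n)
    (e e' : Equiv.Perm (Fin m)) (x : Fin m) :
    ∑ y ∈ upperContour e x, F (update R i e') y ≤ ∑ y ∈ upperContour e x, F (update R i e) y := by
  simpa [upperContour] using hF (update R i e) (update R i e') i (fun j hj => by simp [hj]) x

lemma Strategyproof.sum_insert_upperContour_le (hF : Strategyproof F) (hS : IsSDS F)
    (R : Profile n m) (i : Fin n) (e e' : Equiv.Perm (Fin m)) (x : Fin m) :
    ∑ y ∈ insert x (upperContour e x), F (update R i e') y ≤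
      ∑ y ∈ insert x (upperContour e x), F (update R i e) y := by
  by_cases hx : IsMax (e x)
  · rw [upperContour_of_isMax hx, insert_erase (mem_univ x), hS.2, hS.2]
  · have hcov : e x ⋖ e (e.symm (Order.succ (e x))) := by
      simpa using Order.covBy_succ_of_not_isMax hx
    rw [← upperContour_of_covBy hcov]
    exact hF.sum_upperContour_le R i e e' _

lemma Strategyproof.apply_le_of_upperContour_eq (hF : Strategyproof F) (hS : IsSDS F)
    (R : Profile n m) (i : Fin n) (h : upperContour e x = upperContour e' y) :
    F (update R i e') x ≤ F (update R i e) x := by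
  have hle := hF.sum_insert_upperContour_le hS R i e e' x
  have hge := hF.sum_upperContour_le R i e' e y
  rw [sum_insert self_notMem_upperContour, sum_insert self_notMem_upperContour] at hle
  rw [← h] at hge
  linarith

lemma Strategyproof.apply_update_congr (hF : Strategyproof F) (hS : IsSDS F)
    (R : Profile n m) (i : Fin n) (h : upperContour e x = upperContour e' x) :
    F (update R i e) x = F (update R i e') x :=
  (hF.apply_le_of_upperContour_eq hS R i h.symm).antisymm (hF.apply_le_of_upperContour_eq hS R i h)

lemma Strategyproof.apply_congr (hF : Strategyproof F) (hS : IsSDS F) {R R' : Profile n m}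
    (h : ∀ i, upperContour (R i) x = upperContour (R' i) x) : F R x = F R' x := by
  refine (eq_of_forall_update_eq (D := fun R => F R x)
    (r := fun _ a b => upperContour a x = upperContour b x) (fun R j a hja => ?_) h).symm
  simpa using hF.apply_update_congr hS R j hja.symm

lemma Strategyproof.apply_swapTop_of_ne (hF : Strategyproof F) (hS : IsSDS F) {R : Profile n m}
    {i : Fin n} (h : R i x ⋖ R i y) (hx : z ≠ x) (hy : z ≠ y) :
    F (swapTop R i x y) z = F R z := by
  simpa [swapTop_eq_update] using
    hF.apply_update_congr hS R i (upperContour_swapRanks_of_ne h hx hy)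

end Strategyproofness

section SwapGain

variable {F : Profile n m → Fin m → ℝ} {R R' : Profile n m} {i j : Fin n} {x y : Fin m}

/-- The probability that `x` loses when voter `i` exchanges `x` and `y`. It is considered only
when `x` is ranked directly above `y`, i.e. `R i x ⋖ R i y`. -/
def swapGain (F : Profile n m → Fin m → ℝ) (R : Profile n m) (i : Fin n) (x y : Fin m) : ℝ :=
  F R x - F (swapTop R i x y) x

lemma swapGain_nonneg (hF : Strategyproof F) (hS : IsSDS F) (h : R i x ⋖ R i y) :
    0 ≤ swapGain F R i x y := by
  have hle := hF.apply_le_of_upperContour_eq hS R i (upperContour_swapRanks_right h).symm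
  rw [← swapTop_eq_update, Function.update_eq_self] at hle
  exact sub_nonneg.mpr hle

lemma swapGain_eq_sub_right (hF : Strategyproof F) (hS : IsSDS F) (h : R i x ⋖ R i y) :
    swapGain F R i x y = F (swapTop R i x y) y - F R y := by
  have hxy := ne_of_apply_covBy h
  have hsum : ∑ z, (F R z - F (swapTop R i x y) z) = 0 := by
    rw [sum_sub_distrib, hS.2, hS.2, sub_self]
  rw [Fintype.sum_eq_add x y hxy fun z hz => by
    rw [hF.apply_swapTop_of_ne hS h hz.1 hz.2, sub_self]] at hsum
  rw [swapGain]
  linarith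

lemma swapGain_update_of_ne (hF : Strategyproof F) (hS : IsSDS F) (h : R i x ⋖ R i y)
    (hji : j ≠ i) {e : Equiv.Perm (Fin m)} (he : e x < e y ↔ R j x < R j y) :
    swapGain F (update R j e) i x y = swapGain F R i x y := by
  have key := eq_of_forall_upperContour_eq_of_iff (D := fun e => swapGain F (update R j e) i x y)
    (ne_of_apply_covBy h) (fun e e' hx => ?_) (fun e e' hy => ?_) he
  · simpa using key
  · simp only [swapGain, swapTop_update_of_ne _ hji]
    rw [hF.apply_update_congr hS R j hx, hF.apply_update_congr hS (swapTop R i x y) j hx]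
  · have hcov : ∀ e, update R j e i x ⋖ update R j e i y := by simpa [hji.symm] using h
    simp only [swapGain_eq_sub_right hF hS (hcov _), swapTop_update_of_ne _ hji]
    rw [hF.apply_update_congr hS R j hy, hF.apply_update_congr hS (swapTop R i x y) j hy]

lemma swapGain_congr (hF : Strategyproof F) (hS : IsSDS F) (h : R i x ⋖ R i y) (hi : R' i = R i)
    (hR : ∀ j, R j x < R j y ↔ R' j x < R' j y) :
    swapGain F R i x y = swapGain F R' i x y := by
  have key := eq_of_forall_update_eq (D := fun Q => swapGain F (update Q i (R i)) i x y)
    (r := fun _ a b => a x < a y ↔ b x < b y) (fun Q j a hja => ?_) hR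
  · have hR' : update R' i (R i) = R' := by rw [← hi, Function.update_eq_self]
    simpa [hR'] using key.symm
  · obtain rfl | hji := eq_or_ne j i
    · simp
    · rw [Function.update_comm hji]
      exact swapGain_update_of_ne hF hS (by simpa using h) hji (by simpa [hji] using hja.symm)

lemma swapGain_voterPerm (hA : Anonymous F) (π : Equiv.Perm (Fin n)) (R : Profile n m) (i : Fin n)
    (x y : Fin m) : swapGain F (fun j => R (π j)) i x y = swapGain F R (π i) x y := by
  have hswap : swapTop (fun j => R (π j)) i x y = fun j => swapTop R (π i) x y (π j) := by
    funext j
    obtain rfl | hj := eq_or_ne j i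
    · rw [swapTop_apply_self, swapTop_apply_self]
    · rw [swapTop_apply_of_ne _ hj, swapTop_apply_of_ne _ (π.injective.ne hj)]
  rw [swapGain, swapGain, hswap, hA, hA]

lemma swapGain_relabel (hN : Neutral F) (τ : Equiv.Perm (Fin m)) (R : Profile n m) (i : Fin n)
    (x y : Fin m) : swapGain F (relabel τ R) i (τ x) (τ y) = swapGain F R i x y := by
  have hswap : swapTop (relabel τ R) i (τ x) (τ y) = relabel τ (swapTop R i x y) := by
    funext j
    obtain rfl | hj := eq_or_ne j i
    · simp [swapTop_apply_self, relabel, swapRanks, Equiv.trans_assoc]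
    · simp [swapTop_apply_of_ne _ hj, relabel]
  rw [swapGain, swapGain, hswap, hN, hN]

lemma exists_perm_apply_eq_and_mem_iff {ι : Type*} [Finite ι] {s t : Finset ι} {i j : ι}
    (hi : i ∈ s) (hj : j ∈ t) (hst : #s = #t) :
    ∃ π : Equiv.Perm ι, π i = j ∧ ∀ k, π k ∈ t ↔ k ∈ s := by
  classical
  let σ := (Finset.equivOfCardEq hst).extendSubtype
  have hσ : ∀ k, σ k ∈ t ↔ k ∈ s := fun k =>
    ⟨fun hk => by_contra fun hks => Equiv.extendSubtype_not_mem _ k hks hk,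
      fun hk => Equiv.extendSubtype_mem _ k hk⟩
  refine ⟨σ.trans (Equiv.swap (σ i) j), by simp, fun k => ?_⟩
  rw [← hσ k, Equiv.trans_apply, Equiv.swap_apply_def]
  split_ifs with h₁ h₂
  · simp [hj, h₁, (hσ i).mpr hi]
  · simp [hj, h₂, (hσ i).mpr hi]
  · rfl

/-- Renaming the alternatives makes the two distinguished rankings equal, permuting the voters
matches the supporters of `x` against `y`, and nothing else matters. -/
lemma swapGain_eq_of_rank_eq_of_suppSize_eq (hF : Strategyproof F) (hS : IsSDS F)
    (hA : Anonymous F) (hN : Neutral F) {i' : Fin n} {x' y' : Fin m} (h : R i x ⋖ R i y)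
    (h' : R' i' x' ⋖ R' i' y') (hrank : R i x = R' i' x')
    (hsupp : suppSize R x y = suppSize R' x' y') :
    swapGain F R i x y = swapGain F R' i' x' y' := by
  have hrank' : R i y = R' i' y' := h.unique_right (hrank ▸ h')
  obtain ⟨π, hπ, hπS⟩ := exists_perm_apply_eq_and_mem_iff
    (s := univ.filter fun j => R' j x' < R' j y') (t := univ.filter fun j => R j x < R j y)
    (i := i') (j := i) (by simpa using h'.lt) (by simpa using h.lt) hsupp.symm
  set τ := (R i).trans (R' i').symm with hτ
  have hx : τ x = x' := by simp [hτ, hrank]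
  have hy : τ y = y' := by simp [hτ, hrank']
  calc swapGain F R i x y = swapGain F (relabel τ R) (π i') x' y' := by
        rw [hπ, ← hx, ← hy, swapGain_relabel hN]
    _ = swapGain F (fun j => relabel τ R (π j)) i' x' y' := (swapGain_voterPerm hA ..).symm
    _ = swapGain F R' i' x' y' := (swapGain_congr hF hS h' ?_ fun j => ?_).symm
  · ext z
    simp [relabel, hπ, hτ]
  · have hj := hπS j
    simp only [mem_filter, mem_univ, true_and] at hj
    simpa [relabel, ← hx, ← hy] using hj.symm

lemma swapGain_add_swapGain_swapTop (F : Profile n m → Fin m → ℝ) (R : Profile n m) (hij : i ≠ j)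
    (x y : Fin m) :
    swapGain F R i x y + swapGain F (swapTop R i x y) j x y =
      swapGain F R j x y + swapGain F (swapTop R j x y) i x y := by
  rw [swapGain, swapGain, swapGain, swapGain, swapTop_comm R hij]
  ring

lemma exists_swapGain_eq (hF : Strategyproof F) (hS : IsSDS F) (hA : Anonymous F)
    (hN : Neutral F) : ∃ g : ℕ → ℕ → ℝ, (∀ s k, 0 ≤ g s k) ∧
      ∀ R i x y, R i x ⋖ R i y → swapGain F R i x y = g (R i x) (suppSize R x y) := by
  let T := {p : Profile n m × Fin n × Fin m × Fin m // p.1 p.2.1 p.2.2.1 ⋖ p.1 p.2.1 p.2.2.2}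
  let index : T → ℕ × ℕ := fun ⟨(R, i, x, y), _⟩ => (R i x, suppSize R x y)
  let gain : T → ℝ := fun ⟨(R, i, x, y), _⟩ => swapGain F R i x y
  have hfac : Function.FactorsThrough gain index := fun ⟨_, h⟩ ⟨_, h'⟩ heq =>
    swapGain_eq_of_rank_eq_of_suppSize_eq hF hS hA hN h h' (Fin.ext (Prod.ext_iff.mp heq).1)
      (Prod.ext_iff.mp heq).2
  refine ⟨fun s k => Function.extend index gain 0 (s, k), fun s k => ?_, fun R i x y h =>
    (hfac.extend_apply 0 ⟨(R, i, x, y), h⟩).symm⟩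
  by_cases hsk : ∃ p, index p = (s, k)
  · obtain ⟨p, hp⟩ := hsk
    simpa only [← hp, hfac.extend_apply] using swapGain_nonneg hF hS p.2
  · simp [Function.extend_apply' _ _ _ hsk]

lemma exists_profile_rank_eq_suppSize_eq {s t k : ℕ} (hs : s + 1 < m) (ht : t + 1 < m)
    (hk : 2 ≤ k) (hkn : k ≤ n) :
    ∃ (R : Profile n m) (i j : Fin n) (x y : Fin m), i ≠ j ∧ R i x ⋖ R i y ∧ R j x ⋖ R j y ∧
      (R i x : ℕ) = s ∧ (R j x : ℕ) = t ∧ suppSize R x y = k := by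
  let x : Fin m := ⟨s, by lia⟩
  let y : Fin m := ⟨s + 1, hs⟩
  have hxy : x < y := by simp [x, y]
  obtain ⟨e, hex, hey⟩ : ∃ e : Equiv.Perm (Fin m), e x = ⟨t, by lia⟩ ∧ e y = ⟨t + 1, ht⟩ :=
    MulAction.is_two_pretransitive_iff.mp (Equiv.Perm.isMultiplyPretransitive _ 2) hxy.ne
      (Fin.ne_of_lt (Nat.lt_succ_self t))
  let i : Fin n := ⟨0, by lia⟩
  let j : Fin n := ⟨1, by lia⟩
  have hij : i ≠ j := by simp [i, j]
  let R : Profile n m := fun l =>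
    if l = j then e else if (l : ℕ) < k then 1 else Equiv.swap x y
  have hRi : R i = 1 := by simp [R, hij, i, show 0 < k by lia]
  have hRj : R j = e := by simp [R]
  have hsupp : ∀ l, R l x < R l y ↔ (l : ℕ) < k := by
    intro l
    dsimp only [R]
    split_ifs with hlj hlk
    · simp [hex, hey, hlj, j, show 1 < k by lia]
    · simpa [hlk] using hxy
    · simpa [hlk] using hxy.le
  refine ⟨R, i, j, x, y, hij, ?_, ?_, by simp [hRi, x], by simp [hRj, hex], ?_⟩
  · simp [hRi, x, y, Fin.covBy_iff]
  · simp [hRj, hex, hey, Fin.covBy_iff]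
  · simp only [suppSize, hsupp, Fin.card_filter_val_lt, hkn, inf_of_le_right]

lemma exists_swapGain_eq_add (hF : Strategyproof F) (hS : IsSDS F) (hA : Anonymous F)
    (hN : Neutral F) (hn : 0 < n) : ∃ a b : ℕ → ℝ, (∀ s, 0 ≤ a s) ∧ (∀ k ∈ Icc 1 n, 0 ≤ b k) ∧
      ∀ R i x y, R i x ⋖ R i y → swapGain F R i x y = a (R i x) + b (suppSize R x y) := by
  obtain ⟨g, hg_nonneg, hg⟩ := exists_swapGain_eq hF hS hA hN
  have interchange : ∀ s t k, s + 1 < m → t + 1 < m → 1 ≤ k → k < n →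
      g s (k + 1) + g t k = g t (k + 1) + g s k := by
    intro s t k hs ht hk hkn
    obtain ⟨R, i, j, x, y, hij, hi, hj, rfl, rfl, hsupp⟩ :=
      exists_profile_rank_eq_suppSize_eq (n := n) hs ht (Nat.succ_le_succ hk) hkn
    have key := swapGain_add_swapGain_swapTop F R hij x y
    rw [hg R i x y hi, hg R j x y hj, hg (swapTop R i x y) j x y, hg (swapTop R j x y) i x y] at key
    · have hsuppi := suppSize_swapTop_add_one hi.lt
      have hsuppj := suppSize_swapTop_add_one hj.lt
      rw [hsupp, Nat.add_right_cancel_iff] at hsuppi hsuppj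
      simpa [hsupp, hsuppi, hsuppj, swapTop_apply_of_ne, hij, hij.symm] using key
    · simpa [swapTop_apply_of_ne, hij] using hi
    · simpa [swapTop_apply_of_ne, hij.symm] using hj
  have sub_const : ∀ s k, s + 1 < m → 1 ≤ k → k ≤ n → g s k - g 0 k = g s 1 - g 0 1 := by
    intro s k hs hk hkn
    induction k, hk using Nat.le_induction with
    | base => rfl
    | succ k hk ih =>
      have := interchange s 0 k hs (by lia) hk hkn
      have := ih (by lia)
      linarith
  obtain ⟨k₀, hk₀, hmin⟩ := exists_min_image (Icc 1 n) (g 0) ⟨1, mem_Icc.mpr ⟨le_rfl, hn⟩⟩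
  refine ⟨fun s => g s k₀, fun k => g 0 k - g 0 k₀, fun s => hg_nonneg s k₀,
    fun k hk => sub_nonneg.mpr (hmin k hk), fun R i x y h => ?_⟩
  have hrank : (R i x : ℕ) + 1 < m := by have := h.lt; lia
  have hsupp : 1 ≤ suppSize R x y := by rw [← suppSize_swapTop_add_one h.lt]; lia
  have := sub_const _ _ hrank hsupp (suppSize_le R x y)
  have := sub_const _ _ hrank (mem_Icc.mp hk₀).1 (mem_Icc.mp hk₀).2
  rw [hg R i x y h]
  linarith

end SwapGain

section Representation

variable {F : Profile n m → Fin m → ℝ} {R R' : Profile n m} {i : Fin n} {x y : Fin m}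

lemma profile_induction {P : Profile n m → Prop} (x : Fin m)
    (bottom : ∀ R, (∀ i, IsMax (R i x)) → P R)
    (swap : ∀ R i y, R i x ⋖ R i y → P (swapTop R i x y) → P R) (R : Profile n m) : P R := by
  induction hr : (fun i => R i x) using WellFoundedGT.induction generalizing R with
  | ind r ih =>
    subst hr
    by_cases hR : ∀ i, IsMax (R i x)
    · exact bottom R hR
    push Not at hR
    obtain ⟨i, hi⟩ := hR
    obtain ⟨y, hy⟩ := (R i).surjective (Order.succ (R i x))
    have hcov : R i x ⋖ R i y := hy ▸ Order.covBy_succ_of_not_isMax hi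
    refine swap R i y hcov (ih _ (Pi.lt_def.mpr ⟨fun j => ?_, i, ?_⟩) _ rfl)
    · obtain rfl | hj := eq_or_ne j i
      · simpa [swapTop_apply_self, swapRanks_apply_left] using hcov.le
      · simp [swapTop_apply_of_ne _ hj]
    · simpa [swapTop_apply_self, swapRanks_apply_left] using hcov.lt

/-- The sum of a point voting term with scores `A` and a supporting size term with weights `B`.
The summand `y = x` equals `B 0`. -/
def scoreValue (A B : ℕ → ℝ) (R : Profile n m) (x : Fin m) : ℝ :=
  ∑ i, A (R i x) + ∑ y, B (suppSize R x y)

lemma scoreValue_sub_scoreValue_swapTop (A B : ℕ → ℝ) (h : R i x ⋖ R i y) :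
    scoreValue A B R x - scoreValue A B (swapTop R i x y) x =
      (A (R i x) - A (R i y)) + (B (suppSize R x y) - B (suppSize R x y - 1)) := by
  have hA : ∑ j, A (R j x) - ∑ j, A (swapTop R i x y j x) = A (R i x) - A (R i y) := by
    rw [← sum_sub_distrib, Fintype.sum_eq_single i fun j hj => by
      rw [swapTop_apply_of_ne _ hj, sub_self], swapTop_apply_self, swapRanks_apply_left]
  have hB : ∑ z, B (suppSize R x z) - ∑ z, B (suppSize (swapTop R i x y) x z) =
      B (suppSize R x y) - B (suppSize R x y - 1) := by
    rw [← sum_sub_distrib, Fintype.sum_eq_single y fun z hz => by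
      rw [suppSize_swapTop_left h hz, sub_self], ← suppSize_swapTop_add_one h.lt,
      Nat.add_sub_cancel]
  rw [scoreValue, scoreValue, ← hA, ← hB]
  ring

lemma apply_eq_of_isMax (hF : Strategyproof F) (hS : IsSDS F) (hN : Neutral F) {x' : Fin m}
    (h : ∀ i, IsMax (R i x)) (h' : ∀ i, IsMax (R' i x')) : F R x = F R' x' := by
  have hx : Equiv.swap x x' x = x' := Equiv.swap_apply_left x x'
  rw [← hN (Equiv.swap x x'), hx]
  refine hF.apply_congr hS fun i => ?_
  rw [upperContour_of_isMax (h' i), upperContour_of_isMax]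
  simpa [relabel] using h i

lemma exists_apply_eq_of_isMax (hF : Strategyproof F) (hS : IsSDS F) (hN : Neutral F) :
    ∃ C, 0 ≤ C ∧ ∀ R x, (∀ i, IsMax (R i x)) → F R x = C := by
  by_cases hmax : ∃ (R : Profile n m) (x : Fin m), ∀ i, IsMax (R i x)
  · obtain ⟨R, x, hR⟩ := hmax
    exact ⟨F R x, hS.1 R x, fun R' x' hR' => apply_eq_of_isMax hF hS hN hR' hR⟩
  · exact ⟨0, le_rfl, fun R x hR => absurd ⟨R, x, hR⟩ hmax⟩

lemma suppSize_eq_zero_of_isMax (h : ∀ i, IsMax (R i x)) (y : Fin m) : suppSize R x y = 0 := by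
  simp [suppSize, fun i => (h i).isTop (R i y)]

lemma exists_eq_scoreValue (hF : Strategyproof F) (hS : IsSDS F) (hA : Anonymous F)
    (hN : Neutral F) (hn : 0 < n) : ∃ A B : ℕ → ℝ, (∀ r, 0 ≤ A r) ∧ B 0 = 0 ∧
      (∀ k ≤ n, B k ≤ B n) ∧ ∀ R x, F R x = scoreValue A B R x := by
  obtain ⟨a, b, ha, hb, hab⟩ := exists_swapGain_eq_add hF hS hA hN hn
  obtain ⟨C, hC, hFC⟩ := exists_apply_eq_of_isMax hF hS hN
  let A : ℕ → ℝ := fun r => C / n + ∑ s ∈ Ico r (m - 1), a s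
  let B : ℕ → ℝ := fun k => ∑ l ∈ range k, b (l + 1)
  refine ⟨A, B, fun r => add_nonneg (by positivity) (sum_nonneg fun s _ => ha s),
    by simp [B], fun k hk => ?_, fun R x => ?_⟩
  · refine sum_le_sum_of_subset_of_nonneg (range_mono hk) fun l hl _ => hb _ ?_
    simp only [mem_range, mem_Icc] at hl ⊢
    lia
  induction R using profile_induction x with
  | bottom R hR =>
    have hlast : ∀ i, m - 1 ≤ (R i x : ℕ) := fun i => (hR i).isTop ⟨m - 1, by have := x.pos; lia⟩
    have hn' : (n : ℝ) ≠ 0 := by positivity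
    simp [hFC R x hR, scoreValue, A, B, suppSize_eq_zero_of_isMax hR, Ico_eq_empty_of_le, hlast,
      mul_div_cancel₀, hn']
  | swap R i y h ih =>
    have hgain := hab R i x y h
    have hscore := scoreValue_sub_scoreValue_swapTop A B h
    have hrank : (R i y : ℕ) = R i x + 1 := (Nat.covBy_iff_add_one_eq.mp (Fin.covBy_iff.mp h)).symm
    have hAstep : A (R i x) - A (R i y) = a (R i x) := by
      have hlt : (R i x : ℕ) < m - 1 := by lia
      simp [A, hrank, sum_eq_sum_Ico_succ_bot hlt]
    have hBstep : B (suppSize R x y) - B (suppSize R x y - 1) = b (suppSize R x y) := by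
      rw [← suppSize_swapTop_add_one h.lt, Nat.add_sub_cancel]
      simp [B, sum_range_succ]
    rw [swapGain, ih] at hgain
    linarith

end Representation

section Symmetrization

open scoped BigOperators

variable {F : Profile n m → Fin m → ℝ} {α : ℝ}

/-- The scheme `F` applied after renaming the voters by `π` and the alternatives by `τ`. -/
def permute (π : Equiv.Perm (Fin n)) (τ : Equiv.Perm (Fin m)) (F : Profile n m → Fin m → ℝ) :
    Profile n m → Fin m → ℝ :=
  fun R x => F (relabel τ fun i => R (π i)) (τ x)

/-- The average of `F` over all renamings of voters and alternatives. -/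
def symmetrize (F : Profile n m → Fin m → ℝ) : Profile n m → Fin m → ℝ :=
  fun R x => 𝔼 p : Equiv.Perm (Fin n) × Equiv.Perm (Fin m), permute p.1 p.2 F R x

lemma suppSize_relabel_voterPerm (π : Equiv.Perm (Fin n)) (τ : Equiv.Perm (Fin m))
    (R : Profile n m) (x y : Fin m) :
    suppSize (relabel τ fun i => R (π i)) (τ x) (τ y) = suppSize R x y :=
  card_equiv π fun i => by simp [relabel]

lemma IsSDS.permute (hS : IsSDS F) (π : Equiv.Perm (Fin n)) (τ : Equiv.Perm (Fin m)) :
    IsSDS (permute π τ F) :=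
  ⟨fun _ _ => hS.1 _ _, fun _ => (Equiv.sum_comp τ _).trans (hS.2 _)⟩

lemma Strategyproof.permute (hF : Strategyproof F) (π : Equiv.Perm (Fin n))
    (τ : Equiv.Perm (Fin m)) : Strategyproof (permute π τ F) := by
  intro R R' i hR x
  have key := hF (relabel τ fun j => R (π j)) (relabel τ fun j => R' (π j)) (π.symm i)
    (fun j hj => by simp only [relabel, hR (π j) (by simpa [Equiv.eq_symm_apply] using hj)]) (τ x)
  have reindex : ∀ G : Fin m → ℝ,
      ∑ z ∈ univ.filter (fun z => R i (τ.symm z) < R i x), G z =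
        ∑ y ∈ univ.filter (fun y => R i y < R i x), G (τ y) :=
    fun G => (sum_equiv τ (by simp) (by simp)).symm
  simpa [relabel, reindex, _root_.permute] using key

lemma CondorcetConsistent.permute (hC : CondorcetConsistent F α) (π : Equiv.Perm (Fin n))
    (τ : Equiv.Perm (Fin m)) : CondorcetConsistent (permute π τ F) α := by
  intro R x hx
  refine hC _ _ fun y hy => ?_
  obtain ⟨y, rfl⟩ := τ.surjective y
  simpa [suppSize_relabel_voterPerm] using hx y (by simpa using hy)

lemma IsSDS.symmetrize (hS : IsSDS F) : IsSDS (symmetrize F) := by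
  refine ⟨fun R x => expect_nonneg fun p _ => (hS.permute p.1 p.2).1 R x, fun R => ?_⟩
  simp only [_root_.symmetrize, ← expect_sum_comm, (hS.permute _ _).2, Fintype.expect_const]

lemma Strategyproof.symmetrize (hF : Strategyproof F) : Strategyproof (symmetrize F) := by
  intro R R' i hR x
  simp only [_root_.symmetrize, ← expect_sum_comm]
  exact expect_le_expect fun p _ => hF.permute p.1 p.2 R R' i hR x

lemma CondorcetConsistent.symmetrize (hC : CondorcetConsistent F α) :
    CondorcetConsistent (symmetrize F) α :=
  fun R x hx => le_expect univ_nonempty fun p _ => hC.permute p.1 p.2 R x hx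

lemma symmetrize_anonymous (F : Profile n m → Fin m → ℝ) : Anonymous (symmetrize F) := by
  intro π R
  funext x
  exact Fintype.expect_equiv ((Equiv.mulLeft π).prodCongr (Equiv.refl _)) _ _ fun p => rfl

lemma symmetrize_neutral (F : Profile n m → Fin m → ℝ) : Neutral (symmetrize F) := by
  intro τ R x
  exact Fintype.expect_equiv ((Equiv.refl _).prodCongr (Equiv.mulRight τ)) _ _ fun p => rfl

end Symmetrization

section CondorcetProfiles

variable {x : Fin m}

lemma exists_pairwise_disjoint_subset_card_eq {α κ : Type*} [Fintype κ] {s : Finset α} {l : κ → ℕ}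
    (h : ∑ c, l c ≤ #s) :
    ∃ U : κ → Finset α, Pairwise (Function.onFun Disjoint U) ∧ ∀ c, U c ⊆ s ∧ #(U c) = l c := by
  obtain ⟨f⟩ : Nonempty ((Σ c, Fin (l c)) ↪ s) :=
    Function.Embedding.nonempty_of_card_le (by simpa using h)
  refine ⟨fun c => univ.map (((Function.Embedding.sigmaMk c).trans f).trans
    (Function.Embedding.subtype _)), fun c d hcd => ?_, fun c => ⟨fun z => ?_, by simp⟩⟩
  · simp only [Function.onFun, disjoint_left, mem_map]
    rintro _ ⟨a, -, rfl⟩ ⟨b, -, hab⟩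
    exact hcd (Sigma.ext_iff.mp (f.injective (Subtype.ext hab))).1.symm
  · rintro hz
    obtain ⟨a, -, rfl⟩ := mem_map.mp hz
    exact (f ⟨c, a⟩).2

lemma condorcetWinner_of_two_mul_suppSize_lt {R : Profile n m}
    (h : ∀ y, y ≠ x → 2 * suppSize R y x < n) : CondorcetWinner R x := by
  intro y hy
  have := h y hy
  have := suppSize_add_suppSize R hy
  lia

lemma card_filter_ofNat_eq_le (n : ℕ) {d : ℕ} [NeZero d] (c : Fin d) :
    #(univ.filter fun i : Fin n => Fin.ofNat d i = c) ≤ (n + d - 1) / d := by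
  rw [← card_range ((n + d - 1) / d)]
  refine card_le_card_of_injOn (fun i => (i : ℕ) / d) (fun i _ => ?_) fun i hi j hj hij => ?_
  · have hle : (i + d) / d ≤ (n + d - 1) / d := Nat.div_le_div_right (by lia)
    rw [Nat.add_div_right _ (NeZero.pos d)] at hle
    simpa using hle
  · simp only [coe_filter, mem_univ, true_and, Set.mem_ofPred_eq, Fin.ext_iff, Fin.val_ofNat]
      at hi hj
    exact Fin.ext (Nat.ext_div_mod hij (hi.trans hj.symm))

/-- Voters in different residue classes modulo `4` put disjoint sets above `x`, so each rival of
`x` is preferred by at most `⌈n / 4⌉ < n / 2` voters. -/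
lemma exists_condorcetWinner_rank_eq_card (hn : 3 ≤ n) {U : Fin 4 → Finset (Fin m)}
    (hdisj : Pairwise (Function.onFun Disjoint U)) (hU : ∀ c, x ∉ U c) :
    ∃ R : Profile n m, CondorcetWinner R x ∧ ∀ i, (R i x : ℕ) = #(U (Fin.ofNat 4 i)) := by
  choose e he using fun c => exists_perm_upperContour_eq (hU c)
  refine ⟨fun i => e (Fin.ofNat 4 i), condorcetWinner_of_two_mul_suppSize_lt fun y _ => ?_,
    fun i => by rw [← he, card_upperContour]⟩
  simp only [suppSize, ← mem_upperContour, he]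
  by_cases hy : ∃ c, y ∈ U c
  · obtain ⟨c, hc⟩ := hy
    have hclass : ∀ d, y ∈ U d → d = c := fun d hd =>
      by_contra fun hdc => disjoint_left.mp (hdisj hdc) hd hc
    have := card_le_card (monotone_filter_right (univ : Finset (Fin n))
      fun i _ => hclass (Fin.ofNat 4 i))
    have := card_filter_ofNat_eq_le n c
    lia
  · push Not at hy
    simpa [hy] using Nat.zero_lt_of_lt hn

lemma exists_condorcetWinner_rank_eq (hn : 3 ≤ n) (x : Fin m) {t : ℕ} (ht : t < m) :
    ∃ R : Profile n m, CondorcetWinner R x ∧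
      ∀ i, (R i x : ℕ) = if Fin.ofNat 4 (i : ℕ) < 2 then t / 2 else (m - 1 - t) / 2 := by
  have hcard : ∑ c : Fin 4, (if c < 2 then t / 2 else (m - 1 - t) / 2) ≤ #(univ.erase x) := by
    rw [card_erase_of_mem (mem_univ x), card_univ, Fintype.card_fin]
    have hsum : ∑ c : Fin 4, (if c < 2 then t / 2 else (m - 1 - t) / 2) =
        t / 2 + t / 2 + (m - 1 - t) / 2 + (m - 1 - t) / 2 := by
      simp [Fin.sum_univ_four]
    lia
  obtain ⟨U, hdisj, hU⟩ := exists_pairwise_disjoint_subset_card_eq hcard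
  obtain ⟨R, hR, hrank⟩ := exists_condorcetWinner_rank_eq_card hn hdisj
    fun c hx => notMem_erase x univ ((hU c).1 hx)
  exact ⟨R, hR, fun i => (hrank i).trans (hU _).2⟩

end CondorcetProfiles

section Bound

variable {A B : ℕ → ℝ}

lemma sum_range_div_two_le (hA : ∀ r, 0 ≤ A r) (N : ℕ) :
    ∑ t ∈ range N, A (t / 2) ≤ 2 * ∑ r ∈ range N, A r := by
  have heven : ∀ N, ∑ t ∈ range (2 * N), A (t / 2) = 2 * ∑ r ∈ range N, A r := by
    intro N
    induction N with
    | zero => simp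
    | succ N ih =>
      rw [Nat.mul_succ, sum_range_succ, sum_range_succ, ih, sum_range_succ,
        show (2 * N + 1) / 2 = N by lia, show 2 * N / 2 = N by lia]
      ring
  rw [← heven]
  exact sum_le_sum_of_subset_of_nonneg (range_mono (by lia)) fun _ _ _ => hA _

lemma scoreValue_le (hB0 : B 0 = 0) (hB : ∀ k ≤ n, B k ≤ B n) (R : Profile n m) (x : Fin m) :
    scoreValue A B R x ≤ ∑ i, A (R i x) + (m - 1 : ℕ) * B n := by
  have hsum : ∑ y ∈ univ.erase x, B (suppSize R x y) ≤ #(univ.erase x) • B n :=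
    sum_le_card_nsmul _ _ _ fun y _ => hB _ (suppSize_le R x y)
  rw [scoreValue, ← add_sum_erase _ _ (mem_univ x), suppSize_self, hB0, zero_add]
  simpa using hsum

lemma two_mul_sum_scoreValue_one (A : ℕ → ℝ) (hB0 : B 0 = 0) :
    2 * ∑ x, scoreValue A B (1 : Profile n m) x =
      2 * n * ∑ r ∈ range m, A r + m * (m - 1 : ℕ) * B n := by
  have hsupp : ∀ x y, B (suppSize (1 : Profile n m) x y) = if x < y then B n else 0 := by
    intro x y
    split_ifs with hxy <;> simp [suppSize, hxy, hB0]
  have hpairs : ∑ x : Fin m, ∑ y, B (suppSize (1 : Profile n m) x y) =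
      (∑ y ∈ range m, y : ℕ) * B n := by
    rw [sum_comm, Nat.cast_sum, sum_mul, ← Fin.sum_univ_eq_sum_range (fun y => (y : ℝ) * B n)]
    simp [hsupp, sum_ite, filter_gt_eq_Iio]
  have hgauss : ((∑ y ∈ range m, y : ℕ) : ℝ) * 2 = m * (m - 1 : ℕ) := by
    exact_mod_cast sum_range_id_mul_two m
  have hranks : ∑ x : Fin m, ∑ i : Fin n, A ((1 : Profile n m) i x) = n * ∑ r ∈ range m, A r := by
    simp [← mul_sum, Fin.sum_univ_eq_sum_range A]
  simp only [scoreValue, sum_add_distrib, hpairs, hranks, ← hgauss]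
  ring

/-- As `t` runs through `range m`, the ranks that each voter gives to the Condorcet winner of the
`t`-th profile take every value at most twice. -/
lemma mul_le_two_of_condorcetConsistent [NeZero m] (hn : 3 ≤ n) {F : Profile n m → Fin m → ℝ}
    {α : ℝ} (hS : IsSDS F) (hF : Strategyproof F) (hC : CondorcetConsistent F α)
    (hA : Anonymous F) (hN : Neutral F) : m * α ≤ 2 := by
  obtain ⟨A, B, hA0, hB0, hBn, hrep⟩ := exists_eq_scoreValue hF hS hA hN (by lia)
  let rank (i : Fin n) (t : ℕ) : ℕ := if Fin.ofNat 4 (i : ℕ) < 2 then t / 2 else (m - 1 - t) / 2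
  have hbound : ∀ t ∈ range m, α ≤ ∑ i, A (rank i t) + (m - 1 : ℕ) * B n := by
    intro t ht
    obtain ⟨R, hR, hrank⟩ := exists_condorcetWinner_rank_eq hn (0 : Fin m) (mem_range.mp ht)
    calc α ≤ scoreValue A B R 0 := hrep R 0 ▸ hC R 0 hR
      _ ≤ _ := by simpa only [hrank] using scoreValue_le hB0 hBn R 0
  have hsum : ∀ i, ∑ t ∈ range m, A (rank i t) ≤ 2 * ∑ r ∈ range m, A r := by
    intro i
    by_cases hi : Fin.ofNat 4 (i : ℕ) < 2
    · simpa only [rank, if_pos hi] using sum_range_div_two_le hA0 m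
    · simp only [rank, if_neg hi]
      exact (sum_range_reflect (fun t => A (t / 2)) m).trans_le (sum_range_div_two_le hA0 m)
  calc m * α = ∑ _t ∈ range m, α := by simp
    _ ≤ ∑ t ∈ range m, (∑ i, A (rank i t) + (m - 1 : ℕ) * B n) := sum_le_sum hbound
    _ = ∑ i, ∑ t ∈ range m, A (rank i t) + m * (m - 1 : ℕ) * B n := by
      rw [sum_add_distrib, sum_comm]
      simp [mul_assoc]
    _ ≤ ∑ _i : Fin n, 2 * ∑ r ∈ range m, A r + m * (m - 1 : ℕ) * B n := by
      gcongr with i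
      exact hsum i
    _ = 2 * ∑ x, F 1 x := by
      simp only [hrep, two_mul_sum_scoreValue_one A hB0, sum_const, card_univ, Fintype.card_fin,
        nsmul_eq_mul]
      ring
    _ = 2 := by rw [hS.2, mul_one]

end Bound

end

/-- For `n ≥ 3` voters and `m` alternatives, there is no
strategyproof SDS that is `α`-Condorcet-consistent for any `α > 2/m`. -/
theorem no_strategyproof_alpha_condorcet_consistent (n m : ℕ) (hn : 3 ≤ n)
    (α : ℝ) (hα : 2 / (m : ℝ) < α) :
    ¬ ∃ F : Profile n m → Fin m → ℝ,
        IsSDS F ∧ Strategyproof F ∧ CondorcetConsistent F α := by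
  rintro ⟨F, hS, hF, hC⟩
  obtain rfl | hm := Nat.eq_zero_or_pos m
  · simpa using hS.2 fun _ => 1
  have : NeZero m := ⟨hm.ne'⟩
  have hbound : m * α ≤ 2 := mul_le_two_of_condorcetConsistent hn hS.symmetrize hF.symmetrize
    hC.symmetrize (symmetrize_anonymous F) (symmetrize_neutral F)
  rw [div_lt_iff₀' (by exact_mod_cast hm)] at hα
  exact hα.not_ge hbound
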